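/- Let 2 ≤ k ≤ n and 0 ≤ l ≤ k−2. The function λ ↦ ( σ_{k−1}(λ)/σ_l(λ) )^{1/(k−1−l)} is concave on the cone Γ_{k−1}. -/

import Mathlib

open Finset

/-- The `k`-th elementary symmetric function of `lam : Fin n → ℝ`. -/
noncomputable def esymm (n k : ℕ) (lam : Fin n → ℝ) : ℝ :=
  ∑ s ∈ Finset.powersetCard k (Finset.univ : Finset (Fin n)), ∏ i ∈ s, lam i

/-- The Gårding cone `Γ_k ⊆ ℝ^n`. -/
def GammaCone (n k : ℕ) : Set (Fin n → ℝ) :=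
  {lam | ∀ i : ℕ, 1 ≤ i → i ≤ k → 0 < esymm n i lam}

/-- The `j`-th elementary symmetric function of the variables indexed by the finite set `s`. -/
def esymmOn (s : Finset ℕ) (j : ℕ) (x : ℕ → ℝ) : ℝ :=
  ∑ t ∈ s.powersetCard j, ∏ i ∈ t, x i

/-- The Gårding cone in the variables indexed by `s`, as a set of functions on `ℕ`. -/
def gardingOn (s : Finset ℕ) (j : ℕ) : Set (ℕ → ℝ) :=
  {x | ∀ i ≤ j, 0 < esymmOn s i x}

theorem esymmOn_zero (s : Finset ℕ) (x : ℕ → ℝ) : esymmOn s 0 x = 1 := by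
  simp [esymmOn]

theorem esymmOn_insert {s : Finset ℕ} {a : ℕ} (ha : a ∉ s) (j : ℕ) (x : ℕ → ℝ) :
    esymmOn (insert a s) (j + 1) x = esymmOn s (j + 1) x + x a * esymmOn s j x := by
  have hmem : ∀ t ∈ s.powersetCard j, a ∉ t := fun t ht h =>
    ha ((mem_powersetCard.1 ht).1 h)
  unfold esymmOn
  rw [powersetCard_succ_insert ha, sum_union, sum_image, mul_sum]
  · congr 1
    exact sum_congr rfl fun t ht => prod_insert (hmem t ht)
  · intro t ht u hu htu
    rw [← erase_insert (hmem t ht), ← erase_insert (hmem u hu), htu]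
  · refine disjoint_left.2 fun t ht ht' => ?_
    obtain ⟨u, -, rfl⟩ := mem_image.1 ht'
    exact ha ((mem_powersetCard.1 ht).1 (mem_insert_self a u))

theorem esymmOn_erase {s : Finset ℕ} {a : ℕ} (ha : a ∈ s) (j : ℕ) (x : ℕ → ℝ) :
    esymmOn s (j + 1) x = esymmOn (s.erase a) (j + 1) x + x a * esymmOn (s.erase a) j x := by
  conv_lhs => rw [← insert_erase ha]
  exact esymmOn_insert (notMem_erase a s) j x

theorem esymmOn_congr {s : Finset ℕ} {x y : ℕ → ℝ} (h : ∀ i ∈ s, x i = y i) (j : ℕ) :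
    esymmOn s j x = esymmOn s j y :=
  sum_congr rfl fun _ ht => prod_congr rfl fun i hi => h i ((mem_powersetCard.1 ht).1 hi)

theorem sum_mul_esymmOn_erase (s : Finset ℕ) (j : ℕ) (x : ℕ → ℝ) :
    ∑ i ∈ s, x i * esymmOn (s.erase i) j x = (j + 1) * esymmOn s (j + 1) x := by
  induction s using Finset.induction_on generalizing j with
  | empty => simp [esymmOn, powersetCard_eq_empty.2 (show #(∅ : Finset ℕ) < j + 1 by simp)]
  | insert a s ha ih =>
    rw [sum_insert ha, erase_insert ha, esymmOn_insert ha]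
    have hne : ∀ i ∈ s, (insert a s).erase i = insert a (s.erase i) := fun i hi =>
      erase_insert_of_ne fun h => ha (h ▸ hi)
    have hna : ∀ i, a ∉ s.erase i := fun i h => ha (mem_of_mem_erase h)
    cases j with
    | zero =>
      have := ih 0
      simp only [esymmOn_zero] at this ⊢
      rw [this]
      push_cast
      ring
    | succ j =>
      have : ∑ i ∈ s, x i * esymmOn ((insert a s).erase i) (j + 1) x =
          ∑ i ∈ s, x i * esymmOn (s.erase i) (j + 1) x +
            x a * ∑ i ∈ s, x i * esymmOn (s.erase i) j x := by
        rw [mul_sum, ← sum_add_distrib]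
        refine sum_congr rfl fun i hi => ?_
        rw [hne i hi, esymmOn_insert (hna i)]
        ring
      rw [this, ih, ih]
      push_cast
      ring

theorem gardingOn_anti (s : Finset ℕ) {i j : ℕ} (h : i ≤ j) : gardingOn s j ⊆ gardingOn s i :=
  fun _ hx m hm => hx m (hm.trans h)

theorem mem_gardingOn_succ {s : Finset ℕ} {j : ℕ} {x : ℕ → ℝ} :
    x ∈ gardingOn s (j + 1) ↔ x ∈ gardingOn s j ∧ 0 < esymmOn s (j + 1) x := by
  refine ⟨fun h => ⟨gardingOn_anti s j.le_succ h, h _ le_rfl⟩, fun h i hi => ?_⟩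
  rcases Nat.le_succ_iff.1 hi with hi | rfl
  · exact h.1 i hi
  · exact h.2

theorem convex_gardingOn_succ {s : Finset ℕ} {j : ℕ}
    (h : ConcaveOn ℝ (gardingOn s j) fun x => esymmOn s (j + 1) x / esymmOn s j x) :
    Convex ℝ (gardingOn s (j + 1)) := by
  suffices gardingOn s (j + 1) =
      {x ∈ gardingOn s j | 0 < esymmOn s (j + 1) x / esymmOn s j x} from this ▸ h.convex_gt 0
  ext x
  rw [mem_gardingOn_succ]
  exact and_congr_right fun hx => (div_pos_iff_of_pos_right (hx j le_rfl)).symm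

/-- The function `(p, q) ↦ p ^ 2 / q` is jointly convex, and decreasing in `q > 0`. -/
theorem sq_div_le_of_le {p p' q q' r t u : ℝ} (hq : 0 < q) (hq' : 0 < q') (ht : 0 ≤ t)
    (hu : 0 ≤ u) (hr : 0 < r) (h : t * q + u * q' ≤ r) :
    (t * p + u * p') ^ 2 / r ≤ t * (p ^ 2 / q) + u * (p' ^ 2 / q') := by
  rw [div_le_iff₀ hr]
  have hnn : 0 ≤ t * (p ^ 2 / q) + u * (p' ^ 2 / q') := by positivity
  refine le_trans ?_ (mul_le_mul_of_nonneg_left h hnn)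
  have key : (t * (p ^ 2 / q) + u * (p' ^ 2 / q')) * (t * q + u * q') - (t * p + u * p') ^ 2 =
      t * u * ((p * q' - p' * q) ^ 2 / (q * q')) := by
    field_simp
    ring
  have : 0 ≤ t * u * ((p * q' - p' * q) ^ 2 / (q * q')) := by positivity
  linarith

theorem concaveOn_esymmOn_div_succ {j : ℕ}
    (hC : ∀ s, ConcaveOn ℝ (gardingOn s j) fun x => esymmOn s (j + 1) x / esymmOn s j x)
    (hA : ∀ s, ∀ i ∈ s, gardingOn s (j + 1) ⊆ gardingOn (s.erase i) j) (s : Finset ℕ) :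
    ConcaveOn ℝ (gardingOn s (j + 1)) fun x => esymmOn s (j + 2) x / esymmOn s (j + 1) x := by
  have hconv := convex_gardingOn_succ (hC s)
  have hpos : ∀ x ∈ gardingOn s (j + 1), ∀ i ∈ s,
      0 < x i + esymmOn (s.erase i) (j + 1) x / esymmOn (s.erase i) j x := by
    intro x hx i hi
    have hb := hA s i hi hx j le_rfl
    have h := hx (j + 1) le_rfl
    rw [esymmOn_erase hi] at h
    have : x i + esymmOn (s.erase i) (j + 1) x / esymmOn (s.erase i) j x =
        (esymmOn (s.erase i) (j + 1) x + x i * esymmOn (s.erase i) j x) /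
          esymmOn (s.erase i) j x := by
      field_simp
      ring
    rw [this]
    positivity
  have hrep : ∀ x ∈ gardingOn s (j + 1), esymmOn s (j + 2) x / esymmOn s (j + 1) x =
      ((j : ℝ) + 2)⁻¹ * ∑ i ∈ s, (x i -
        x i ^ 2 / (x i + esymmOn (s.erase i) (j + 1) x / esymmOn (s.erase i) j x)) := by
    intro x hx
    have hsum := sum_mul_esymmOn_erase s (j + 1) x
    push_cast at hsum
    have hj : (0 : ℝ) < (j : ℝ) + 2 := by positivity
    have h0 := hx (j + 1) le_rfl
    have hterm : ∀ i ∈ s, x i -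
        x i ^ 2 / (x i + esymmOn (s.erase i) (j + 1) x / esymmOn (s.erase i) j x) =
        x i * esymmOn (s.erase i) (j + 1) x / esymmOn s (j + 1) x := by
      intro i hi
      have hb := hA s i hi hx j le_rfl
      have hp := (hpos x hx i hi).ne'
      rw [sub_eq_iff_eq_add, eq_comm, div_add_div _ _ h0.ne' hp, div_eq_iff (mul_ne_zero h0.ne' hp),
        esymmOn_erase hi]
      field_simp
      ring
    rw [sum_congr rfl hterm, ← sum_div, hsum]
    field_simp
    ring
  refine ⟨hconv, fun x hx y hy t u ht hu htu => ?_⟩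
  have hz := hconv hx hy ht hu htu
  simp only [smul_eq_mul]
  rw [hrep x hx, hrep y hy, hrep _ hz, mul_left_comm t, mul_left_comm u, ← mul_add]
  refine mul_le_mul_of_nonneg_left ?_ (by positivity)
  rw [mul_sum, mul_sum, ← sum_add_distrib]
  refine sum_le_sum fun i hi => ?_
  have hq := (hC (s.erase i)).2 (hA s i hi hx) (hA s i hi hy) ht hu htu
  simp only [smul_eq_mul] at hq
  have := sq_div_le_of_le (p := x i) (p' := y i) (hpos x hx i hi) (hpos y hy i hi) ht hu
    (hpos _ hz i hi) (by
      simp only [Pi.add_apply, Pi.smul_apply, smul_eq_mul]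
      linarith)
  simp only [Pi.add_apply, Pi.smul_apply, smul_eq_mul] at this ⊢
  linarith

/-- Midpoint concavity of `r ↦ (a + r * b) / (b + r * c)` forces `a * c ≤ b ^ 2`. -/
theorem mul_le_sq_of_midpoint {a b c r : ℝ} (hc : 0 < c) (hr : 0 < b + r * c)
    (h : (1 / 2) * ((a + r * b) / (b + r * c)) +
        (1 / 2) * ((a + (r + 2) * b) / (b + (r + 2) * c)) ≤
      (a + (r + 1) * b) / (b + (r + 1) * c)) : c * a ≤ b ^ 2 := by
  rw [show b + (r + 1) * c = b + r * c + c by ring,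
    show b + (r + 2) * c = b + r * c + 2 * c by ring] at h
  generalize hd : b + r * c = d at hr h
  have key : (1 / 2) * ((a + r * b) / d) + (1 / 2) * ((a + (r + 2) * b) / (d + 2 * c)) -
      (a + (r + 1) * b) / (d + c) = (c * a - b ^ 2) * (c / (d * (d + c) * (d + 2 * c))) := by
    field_simp
    rw [← hd]
    ring
  by_contra! hlt
  have : 0 < (c * a - b ^ 2) * (c / (d * (d + c) * (d + 2 * c))) :=
    mul_pos (sub_pos.2 hlt) (by positivity)
  linarith

/-- A form of Newton's inequality on the cone `gardingOn s j`. -/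
theorem esymmOn_mul_le_sq {j : ℕ}
    (hC : ∀ s, ConcaveOn ℝ (gardingOn s (j + 1))
      fun x => esymmOn s (j + 2) x / esymmOn s (j + 1) x)
    {s : Finset ℕ} {x : ℕ → ℝ} (hx : x ∈ gardingOn s j) :
    esymmOn s j x * esymmOn s (j + 2) x ≤ esymmOn s (j + 1) x ^ 2 := by
  obtain ⟨a, ha⟩ := Infinite.exists_notMem_finset s
  have hup : ∀ r m, esymmOn s m (Function.update x a r) = esymmOn s m x := fun r m =>
    esymmOn_congr (fun i hi => Function.update_of_ne (ne_of_mem_of_not_mem hi ha) _ _) m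
  have hins : ∀ r m, esymmOn (insert a s) (m + 1) (Function.update x a r) =
      esymmOn s (m + 1) x + r * esymmOn s m x := fun r m => by
    rw [esymmOn_insert ha, hup, hup, Function.update_self]
  obtain ⟨r, hr⟩ : ∃ r : ℝ, ∀ m ∈ Set.Iic j, -(esymmOn s (m + 1) x / esymmOn s m x) < r :=
    ((Filter.eventually_all_finite (Set.finite_Iic j)).2 fun _ _ =>
      Filter.eventually_gt_atTop _).exists
  have hmem : ∀ r' ≥ r, Function.update x a r' ∈ gardingOn (insert a s) (j + 1) := by
    intro r' hr' m hm
    cases m with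
    | zero => simp [esymmOn_zero]
    | succ m =>
      have hm' : m ≤ j := by lia
      rw [hins]
      have := (hr m hm').trans_le hr'
      rw [← neg_div, div_lt_iff₀ (hx m hm')] at this
      linarith
  have hmid := (hC (insert a s)).2 (hmem r le_rfl) (hmem (r + 2) (by linarith))
    (by norm_num : (0 : ℝ) ≤ 1 / 2) (by norm_num : (0 : ℝ) ≤ 1 / 2) (by norm_num)
  have hcomb : (1 / 2 : ℝ) • Function.update x a r + (1 / 2 : ℝ) • Function.update x a (r + 2) =
      Function.update x a (r + 1) := by
    ext i
    by_cases hi : i = a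
    · subst hi
      simp only [Pi.add_apply, Pi.smul_apply, Function.update_self, smul_eq_mul]
      ring
    · simp only [Pi.add_apply, Pi.smul_apply, Function.update_of_ne hi, smul_eq_mul]
      ring
  rw [hcomb] at hmid
  simp only [hins, smul_eq_mul] at hmid
  refine mul_le_sq_of_midpoint (hx j le_rfl) ?_ hmid
  have := hmem r le_rfl (j + 1) le_rfl
  rwa [hins] at this

theorem gardingOn_subset_erase_succ {j : ℕ}
    (hC : ∀ s, ConcaveOn ℝ (gardingOn s (j + 1))
      fun x => esymmOn s (j + 2) x / esymmOn s (j + 1) x)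
    (hA : ∀ s, ∀ i ∈ s, gardingOn s (j + 1) ⊆ gardingOn (s.erase i) j)
    {s : Finset ℕ} {i : ℕ} (hi : i ∈ s) :
    gardingOn s (j + 2) ⊆ gardingOn (s.erase i) (j + 1) := by
  intro x hx
  have hmem := hA s i hi (gardingOn_anti s (j + 1).le_succ hx)
  refine mem_gardingOn_succ.2 ⟨hmem, ?_⟩
  have hN := esymmOn_mul_le_sq hC hmem
  have h0 := hmem j le_rfl
  have h1 := hx (j + 1) (by lia)
  have h2 := hx (j + 2) le_rfl
  rw [esymmOn_erase hi] at h1 h2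
  set c := esymmOn (s.erase i) j x
  set b := esymmOn (s.erase i) (j + 1) x
  set a := esymmOn (s.erase i) (j + 2) x
  by_contra! hb
  have h3 : 0 < c * (a + x i * b) := mul_pos h0 h2
  have h4 : 0 ≤ -b * (b + x i * c) := mul_nonneg (neg_nonneg.2 hb) h1.le
  nlinarith

theorem concaveOn_esymmOn_div_and_gardingOn_subset_erase (j : ℕ) :
    (∀ s, ConcaveOn ℝ (gardingOn s j) fun x => esymmOn s (j + 1) x / esymmOn s j x) ∧
      ∀ s, ∀ i ∈ s, gardingOn s (j + 1) ⊆ gardingOn (s.erase i) j := by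
  induction j with
  | zero =>
    have huniv : ∀ s, gardingOn s 0 = Set.univ := fun s =>
      Set.eq_univ_of_forall fun x i hi => by
        rw [Nat.le_zero.1 hi, esymmOn_zero]
        exact one_pos
    refine ⟨fun s => ?_, fun s i _ => by simp [huniv]⟩
    rw [huniv]
    refine ⟨convex_univ, fun x _ y _ t u _ _ _ => le_of_eq ?_⟩
    simp [esymmOn, powersetCard_one, mul_sum, sum_add_distrib]
  | succ j ih =>
    have hC := concaveOn_esymmOn_div_succ ih.1 ih.2
    exact ⟨hC, fun s i hi => gardingOn_subset_erase_succ hC ih.2 hi⟩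

theorem concaveOn_esymmOn_div (s : Finset ℕ) (j : ℕ) :
    ConcaveOn ℝ (gardingOn s j) fun x => esymmOn s (j + 1) x / esymmOn s j x :=
  (concaveOn_esymmOn_div_and_gardingOn_subset_erase j).1 s

theorem convex_gardingOn (s : Finset ℕ) (j : ℕ) : Convex ℝ (gardingOn s j) :=
  (concaveOn_esymmOn_div s j).1

/-- The geometric mean is concave and monotone. -/
theorem geom_mean_concave {ι : Type*} {S : Finset ι} (hS : S.Nonempty) {a b c : ι → ℝ} {t u : ℝ}
    (ha : ∀ i ∈ S, 0 < a i) (hb : ∀ i ∈ S, 0 < b i) (hc : ∀ i ∈ S, 0 < c i) (ht : 0 ≤ t)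
    (hu : 0 ≤ u) (h : ∀ i ∈ S, t * a i + u * b i ≤ c i) :
    t * (∏ i ∈ S, a i) ^ ((#S : ℝ)⁻¹) + u * (∏ i ∈ S, b i) ^ ((#S : ℝ)⁻¹) ≤
      (∏ i ∈ S, c i) ^ ((#S : ℝ)⁻¹) := by
  have hcard : (0 : ℝ) < #S := by exact_mod_cast hS.card_pos
  have hP : 0 < (∏ i ∈ S, c i) ^ ((#S : ℝ)⁻¹) := Real.rpow_pos_of_pos (prod_pos hc) _
  have amgm : ∀ d : ι → ℝ, (∀ i ∈ S, 0 < d i) →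
      (∏ i ∈ S, d i) ^ ((#S : ℝ)⁻¹) / (∏ i ∈ S, c i) ^ ((#S : ℝ)⁻¹) ≤
        ∑ i ∈ S, (#S : ℝ)⁻¹ * (d i / c i) := by
    intro d hd
    have hdc : ∀ i ∈ S, 0 ≤ d i / c i := fun i hi => (div_pos (hd i hi) (hc i hi)).le
    have := Real.geom_mean_le_arith_mean_weighted S (fun _ => (#S : ℝ)⁻¹) (fun i => d i / c i)
      (fun _ _ => by positivity) (by simp [hcard.ne']) hdc
    rwa [Real.finsetProd_rpow S _ hdc, prod_div_distrib,
      Real.div_rpow (prod_pos hd).le (prod_pos hc).le] at this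
  rw [← div_le_one hP, add_div, mul_div_assoc, mul_div_assoc]
  calc _ ≤ t * ∑ i ∈ S, (#S : ℝ)⁻¹ * (a i / c i) + u * ∑ i ∈ S, (#S : ℝ)⁻¹ * (b i / c i) :=
        add_le_add (mul_le_mul_of_nonneg_left (amgm a ha) ht)
          (mul_le_mul_of_nonneg_left (amgm b hb) hu)
    _ = ∑ i ∈ S, (#S : ℝ)⁻¹ * ((t * a i + u * b i) / c i) := by
        rw [mul_sum, mul_sum, ← sum_add_distrib]
        exact sum_congr rfl fun i _ => by ring
    _ ≤ ∑ i ∈ S, (#S : ℝ)⁻¹ * 1 := sum_le_sum fun i hi =>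
        mul_le_mul_of_nonneg_left ((div_le_one (hc i hi)).2 (h i hi)) (by positivity)
    _ = 1 := by simp [hcard.ne']

theorem concaveOn_esymmOn_div_rpow (s : Finset ℕ) {l m : ℕ} (hlm : l < m) :
    ConcaveOn ℝ (gardingOn s m)
      fun x => (esymmOn s m x / esymmOn s l x) ^ (((m : ℝ) - l)⁻¹) := by
  have hcard : ((m : ℝ) - l) = #(Ico l m) := by
    rw [Nat.card_Ico, Nat.cast_sub hlm.le]
  have hprod : ∀ x ∈ gardingOn s m, esymmOn s m x / esymmOn s l x =
      ∏ j ∈ Ico l m, esymmOn s (j + 1) x / esymmOn s j x := by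
    intro x hx
    induction m, hlm using Nat.le_induction with
    | base => simp
    | succ m hm ih =>
      have hm' : l < m := hm
      rw [prod_Ico_succ_top hm'.le, ← ih (by rw [Nat.card_Ico, Nat.cast_sub hm'.le])
        (gardingOn_anti s m.le_succ hx), mul_comm, div_mul_div_cancel₀ (hx m m.le_succ).ne']
  have hpos : ∀ x ∈ gardingOn s m, ∀ j ∈ Ico l m, 0 < esymmOn s (j + 1) x / esymmOn s j x :=
    fun x hx j hj => div_pos (hx _ (mem_Ico.1 hj).2) (hx _ (mem_Ico.1 hj).2.le)
  refine ⟨convex_gardingOn s m, fun x hx y hy t u ht hu htu => ?_⟩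
  have hz := convex_gardingOn s m hx hy ht hu htu
  simp only [smul_eq_mul]
  rw [hprod x hx, hprod y hy, hprod _ hz, hcard]
  refine geom_mean_concave (nonempty_Ico.2 hlm) (hpos x hx) (hpos y hy) (hpos _ hz) ht hu
    fun j hj => ?_
  have hsub := gardingOn_anti s (mem_Ico.1 hj).2.le
  exact (concaveOn_esymmOn_div s j).2 (hsub hx) (hsub hy) ht hu htu

/-- Extension of a vector by zero to all of `ℕ`. -/
noncomputable def extendByZero (n : ℕ) : (Fin n → ℝ) →ₗ[ℝ] (ℕ → ℝ) :=
  Function.ExtendByZero.linearMap ℝ (Fin.val : Fin n → ℕ)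

theorem esymmOn_extendByZero (n j : ℕ) (lam : Fin n → ℝ) :
    esymmOn (univ.map (Fin.valEmbedding (n := n))) j (extendByZero n lam) = esymm n j lam := by
  unfold esymmOn esymm
  rw [powersetCard_map, sum_map]
  refine sum_congr rfl fun t _ => ?_
  rw [RelEmbedding.coe_toEmbedding, mapEmbedding_apply, prod_map]
  exact prod_congr rfl fun i _ => Fin.val_injective.extend_apply lam 0 i

theorem preimage_gardingOn (n m : ℕ) :
    extendByZero n ⁻¹' gardingOn (univ.map (Fin.valEmbedding (n := n))) m = GammaCone n m := by
  ext lam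
  simp only [gardingOn, GammaCone, Set.mem_preimage, Set.mem_ofPred_eq, esymmOn_extendByZero]
  refine ⟨fun h i _ hi => h i hi, fun h i hi => ?_⟩
  rcases Nat.eq_zero_or_pos i with rfl | hi0
  · simp [esymm]
  · exact h i hi0 hi

/-- The function `λ ↦ (σ_{k-1}(λ)/σ_l(λ))^{1/(k-1-l)}` is concave on `Γ_{k-1}`. -/
theorem quotient_rpow_concave (n k l : ℕ) (hk2 : 2 ≤ k) (hkn : k ≤ n) (hl : l ≤ k - 2) :
    ConcaveOn ℝ (GammaCone n (k-1))
      (fun lam => (esymm n (k-1) lam / esymm n l lam)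
        ^ (((k : ℝ) - 1 - (l : ℝ))⁻¹)) := by
  have h := (concaveOn_esymmOn_div_rpow (univ.map (Fin.valEmbedding (n := n)))
    (show l < k - 1 by lia)).comp_linearMap (extendByZero n)
  rw [preimage_gardingOn, Nat.cast_sub (by lia : 1 ≤ k), Nat.cast_one] at h
  simpa only [Function.comp_def, esymmOn_extendByZero] using h
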